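/- Let Ω ⊆ ℝ^d be an unbounded open set with Σ(Ω) < ∞ and suppose λ(Ω) = Σ(Ω). Then for every k ≥ 1 and every 1 ≤ p < ∞ one has Λ_{k,p}(Ω) = k^{1/p}·Σ(Ω), and moreover there exists a k-partition (ω₁,…,ω_k) of Ω with λ(ωᵢ) = Σ(Ω) for every i (so that (∑_i λ(ωᵢ)^p)^{1/p} = k^{1/p}·Σ(Ω)); in particular the infimum defining Λ_{k,p}(Ω) is attained. -/

import Mathlib

/-!
Since `λ(Ω \ K) ≤ Σ(Ω)` for every compact `K`, test functions whose Rayleigh quotient is at most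
`Σ(Ω) + ε` can be found arbitrarily far out (`exists_far_test`). Having compact support, they can be
placed in successive disjoint annuli `A_{R n, R (n+1)}` with `ε = 1 / (n + 1)`. Distributing the
annuli (intersected with `Ω`) among `k` cells according to `n mod k` gives every cell infinitely
many of these functions, so that `λ(ωᵢ) ≤ Σ(Ω)` (`exists_cells`). Conversely domain monotonicity
and the hypothesis `λ(Ω) = Σ(Ω)` give `λ(ω) ≥ λ(Ω) = Σ(Ω)` for every nonempty open `ω ⊆ Ω`
(`lambdaLow_mono`), hence equality for these cells and the lower bound for an arbitrary partition.
-/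

open MeasureTheory Metric Set Filter
open scoped ENNReal Topology

noncomputable section

/-- Euclidean space `ℝ^d`. -/
abbrev Euc (d : ℕ) : Type := EuclideanSpace ℝ (Fin d)

/-- The Rayleigh quotient `R_V(u)` of the Schrödinger operator `-Δ + V`. -/
def RayleighQ (d : ℕ) (V : Euc d → ℝ) (u : Euc d → ℝ) : ℝ :=
  (∫ x, (‖gradient u x‖ ^ 2 + V x * u x ^ 2)) / (∫ x, u x ^ 2)

/-- `λ(ω)`: bottom of the spectrum of `-Δ + V` with Dirichlet conditions on `ω`,
via the variational characterization over smooth compactly supported test functions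
supported in `ω`. -/
def lambdaLow (d : ℕ) (V : Euc d → ℝ) (ω : Set (Euc d)) : ℝ :=
  sInf { r : ℝ | ∃ u : Euc d → ℝ, ContDiff ℝ (⊤ : ℕ∞) u ∧ HasCompactSupport u ∧ u ≠ 0 ∧
    tsupport u ⊆ ω ∧ r = RayleighQ d V u }

/-- The set `{ λ(ω \ K) : K ⊆ ℝ^d compact }` appearing in Persson's characterization
of the bottom of the essential spectrum. -/
def specSet (d : ℕ) (V : Euc d → ℝ) (ω : Set (Euc d)) : Set ℝ :=
  { r : ℝ | ∃ K : Set (Euc d), IsCompact K ∧ r = lambdaLow d V (ω \ K) }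

/-- `Σ(ω) := sup { λ(ω \ K) : K compact } ∈ [0,∞]`, as an extended real number. -/
def SigmaE (d : ℕ) (V : Euc d → ℝ) (ω : Set (Euc d)) : ℝ≥0∞ :=
  ⨆ K : { K : Set (Euc d) // IsCompact K }, ENNReal.ofReal (lambdaLow d V (ω \ K.1))

/-- `Σ(ω)` as a real number (meaningful when `specSet` is bounded above,
i.e. when `Σ(ω) < ∞`). -/
def SigmaR (d : ℕ) (V : Euc d → ℝ) (ω : Set (Euc d)) : ℝ :=
  sSup (specSet d V ω)

/-- Open annulus `A_{r,R}(0) = { x : r < |x| < R }`. -/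
def annulusO (d : ℕ) (r R : ℝ) : Set (Euc d) := { x : Euc d | r < ‖x‖ ∧ ‖x‖ < R }

/-- A `k`-partition of `Ω`: a `k`-tuple of pairwise disjoint nonempty open subsets of `Ω`. -/
def IsPartition (d : ℕ) (Ω : Set (Euc d)) {k : ℕ} (ω : Fin k → Set (Euc d)) : Prop :=
  (∀ i, IsOpen (ω i)) ∧ (∀ i, (ω i).Nonempty) ∧ (∀ i, ω i ⊆ Ω) ∧
    ∀ i j, i ≠ j → Disjoint (ω i) (ω j)

/-- `Λ_{k,p}(Ω) := inf (∑ i λ(ωᵢ)^p)^(1/p)` over all `k`-partitions of `Ω`, `1 ≤ p < ∞`. -/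
def LamP (d : ℕ) (V : Euc d → ℝ) (Ω : Set (Euc d)) (k : ℕ) (p : ℝ) : ℝ :=
  sInf { r : ℝ | ∃ ω : Fin k → Set (Euc d), IsPartition d Ω ω ∧
    r = (∑ i, lambdaLow d V (ω i) ^ p) ^ (1 / p) }

/-- `Λ_{k,∞}(Ω) := inf max_i λ(ωᵢ)` over all `k`-partitions of `Ω`. -/
def LamInf (d : ℕ) (V : Euc d → ℝ) (Ω : Set (Euc d)) (k : ℕ) : ℝ :=
  sInf { r : ℝ | ∃ ω : Fin k → Set (Euc d), IsPartition d Ω ω ∧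
    r = ⨆ i, lambdaLow d V (ω i) }

/-- Threshold value `T_{k,p}(Ω) := (Λ_{k-1,p}(Ω)^p + Σ(Ω)^p)^(1/p)` for `1 ≤ p < ∞`. -/
def ThreshT (d : ℕ) (V : Euc d → ℝ) (Ω : Set (Euc d)) (k : ℕ) (p : ℝ) : ℝ :=
  (LamP d V Ω (k - 1) p ^ p + SigmaR d V Ω ^ p) ^ (1 / p)

/-- Admissible test functions for the Dirichlet problem on `ω`: nonzero, smooth, and with compact
support contained in `ω`. -/
def IsTest (d : ℕ) (ω : Set (Euc d)) (u : Euc d → ℝ) : Prop :=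
  ContDiff ℝ (⊤ : ℕ∞) u ∧ HasCompactSupport u ∧ u ≠ 0 ∧ tsupport u ⊆ ω

lemma rayleighQ_nonneg {d : ℕ} {V : Euc d → ℝ} (hV : ∀ x, 0 ≤ V x) (u : Euc d → ℝ) :
    0 ≤ RayleighQ d V u :=
  div_nonneg
    (integral_nonneg fun x => add_nonneg (sq_nonneg _) (mul_nonneg (hV x) (sq_nonneg _)))
    (integral_nonneg fun _ => sq_nonneg _)

lemma lambdaLow_le {d : ℕ} {V : Euc d → ℝ} (hV : ∀ x, 0 ≤ V x) {ω : Set (Euc d)}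
    {u : Euc d → ℝ} (hu : IsTest d ω u) : lambdaLow d V ω ≤ RayleighQ d V u := by
  refine csInf_le ⟨0, ?_⟩ ⟨u, hu.1, hu.2.1, hu.2.2.1, hu.2.2.2, rfl⟩
  rintro _ ⟨v, -, -, -, -, rfl⟩
  exact rayleighQ_nonneg hV v

lemma exists_isTest {d : ℕ} {ω : Set (Euc d)} (ho : IsOpen ω) (hne : ω.Nonempty) :
    ∃ u, IsTest d ω u := by
  obtain ⟨x, hx⟩ := hne
  obtain ⟨f, hf1, hf2, hf3, -, hf5⟩ :=
    exists_contDiff_tsupport_subset (n := (⊤ : ℕ∞)) (ho.mem_nhds hx)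
  refine ⟨f, hf3, hf2, ?_, hf1⟩
  rintro rfl
  simp at hf5

lemma exists_isTest_lt {d : ℕ} {V : Euc d → ℝ} {ω : Set (Euc d)} (ho : IsOpen ω)
    (hne : ω.Nonempty) {c : ℝ} (hc : lambdaLow d V ω < c) :
    ∃ u, IsTest d ω u ∧ RayleighQ d V u < c := by
  obtain ⟨v, hv⟩ := exists_isTest ho hne
  obtain ⟨_, ⟨u, h1, h2, h3, h4, rfl⟩, h⟩ := exists_lt_of_csInf_lt
    (⟨RayleighQ d V v, v, hv.1, hv.2.1, hv.2.2.1, hv.2.2.2, rfl⟩ : Set.Nonempty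
      { r : ℝ | ∃ u : Euc d → ℝ, ContDiff ℝ (⊤ : ℕ∞) u ∧ HasCompactSupport u ∧ u ≠ 0 ∧
        tsupport u ⊆ ω ∧ r = RayleighQ d V u }) hc
  exact ⟨u, ⟨h1, h2, h3, h4⟩, h⟩

/-- Domain monotonicity. The smaller set must be open and nonempty: without test functions
`lambdaLow` takes the junk value `sInf ∅ = 0`. -/
lemma lambdaLow_mono {d : ℕ} {V : Euc d → ℝ} (hV : ∀ x, 0 ≤ V x) {ω Ω : Set (Euc d)}
    (ho : IsOpen ω) (hne : ω.Nonempty) (hsub : ω ⊆ Ω) :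
    lambdaLow d V Ω ≤ lambdaLow d V ω := by
  by_contra! h
  obtain ⟨u, hu, hlt⟩ := exists_isTest_lt ho hne h
  exact hlt.not_ge (lambdaLow_le hV ⟨hu.1, hu.2.1, hu.2.2.1, hu.2.2.2.trans hsub⟩)

/-- Outside every ball there are test functions with quotient below `Σ(Ω) + ε`; compactness of the
support confines each of them to an annulus. -/
lemma exists_far_test {d : ℕ} {V : Euc d → ℝ} {Ω : Set (Euc d)}
    (hΩ : IsOpen Ω) (hunb : ¬ Bornology.IsBounded Ω) (hbdd : BddAbove (specSet d V Ω))
    (R ε : ℝ) (hε : 0 < ε) :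
    ∃ R', R < R' ∧ ∃ u, IsTest d (Ω ∩ annulusO d R R') u ∧
      RayleighQ d V u < SigmaR d V Ω + ε := by
  have hK : IsCompact (closedBall (0 : Euc d) R) := isCompact_closedBall 0 R
  have hne : (Ω \ closedBall (0 : Euc d) R).Nonempty := by
    rw [Set.sdiff_nonempty]
    exact fun h => hunb (isBounded_closedBall.subset h)
  have hle : lambdaLow d V (Ω \ closedBall (0 : Euc d) R) ≤ SigmaR d V Ω :=
    le_csSup hbdd ⟨_, hK, rfl⟩
  obtain ⟨u, ⟨h1, h2, h3, h4⟩, hu⟩ :=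
    exists_isTest_lt (hΩ.sdiff hK.isClosed) hne (hle.trans_lt (lt_add_of_pos_right _ hε))
  obtain ⟨C, hC⟩ := IsCompact.isBounded h2 |>.exists_norm_le
  refine ⟨max R C + 1, by linarith [le_max_left R C], u, ⟨h1, h2, h3, fun x hx => ?_⟩, hu⟩
  have hx' := h4 hx
  refine ⟨hx'.1, ?_, by linarith [hC x hx, le_max_right R C]⟩
  simpa using hx'.2

/-- There is a `k`-partition with `λ(ωᵢ) ≤ Σ(Ω)` for all `i`: each cell is a union of infinitely many
annular pieces of `Ω`, each carrying a test function from `exists_far_test`. -/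
lemma exists_cells {d : ℕ} {V : Euc d → ℝ} (hV : ∀ x, 0 ≤ V x) {Ω : Set (Euc d)}
    (hΩ : IsOpen Ω) (hunb : ¬ Bornology.IsBounded Ω) (hbdd : BddAbove (specSet d V Ω))
    (k : ℕ) :
    ∃ ω : Fin k → Set (Euc d), IsPartition d Ω ω ∧ ∀ i, lambdaLow d V (ω i) ≤ SigmaR d V Ω := by
  have step : ∀ (R : ℝ) (n : ℕ), ∃ R', R < R' ∧ ∃ u, IsTest d (Ω ∩ annulusO d R R') u ∧
      RayleighQ d V u < SigmaR d V Ω + 1 / ((n : ℝ) + 1) := fun R n =>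
    exists_far_test hΩ hunb hbdd R _ Nat.one_div_pos_of_nat
  choose next hlt u hu hR using step
  let R : ℕ → ℝ := fun n => Nat.rec 0 (fun m r => next r m) n
  have hRsucc : ∀ n, R (n + 1) = next (R n) n := fun _ => rfl
  have hmono : StrictMono R := strictMono_nat_of_lt_succ fun n => hRsucc n ▸ hlt (R n) n
  let ω : Fin k → Set (Euc d) := fun i =>
    ⋃ (n : ℕ) (_ : n % k = i), Ω ∩ annulusO d (R n) (R (n + 1))
  have hann : ∀ a b, IsOpen (annulusO d a b) := fun a b =>
    (isOpen_lt continuous_const continuous_norm).inter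
      (isOpen_lt continuous_norm continuous_const)
  have hsub : ∀ (i : Fin k) n, n % k = i → Ω ∩ annulusO d (R n) (R (n + 1)) ⊆ ω i :=
    fun i n h => Set.subset_iUnion₂ (s := fun (n : ℕ) (_ : n % k = i) =>
      Ω ∩ annulusO d (R n) (R (n + 1))) n h
  have htest : ∀ (i : Fin k) n, n % k = i → IsTest d (ω i) (u (R n) n) := fun i n h =>
    ⟨(hu (R n) n).1, (hu (R n) n).2.1, (hu (R n) n).2.2.1, (hu (R n) n).2.2.2.trans (hsub i n h)⟩
  refine ⟨ω, ⟨fun i => isOpen_iUnion fun n => isOpen_iUnion fun _ => hΩ.inter (hann _ _),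
    fun i => ?_, fun i => Set.iUnion₂_subset fun n _ => Set.inter_subset_left, ?_⟩, fun i => ?_⟩
  · have h := htest i i (Nat.mod_eq_of_lt i.2)
    exact (Function.support_nonempty_iff.2 h.2.2.1).mono ((subset_tsupport _).trans h.2.2.2)
  · intro i j hij
    rw [Set.disjoint_left]
    intro x hxi hxj
    simp only [ω, Set.mem_iUnion] at hxi hxj
    obtain ⟨n, hn, -, hn1, hn2⟩ := hxi
    obtain ⟨m, hm, -, hm1, hm2⟩ := hxj
    have h1 : n < m + 1 := hmono.lt_iff_lt.1 (hn1.trans hm2)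
    have h2 : m < n + 1 := hmono.lt_iff_lt.1 (hm1.trans hn2)
    obtain rfl : n = m := by omega
    exact hij (Fin.ext (hn.symm.trans hm))
  · refine le_of_forall_pos_le_add fun ε hε => ?_
    obtain ⟨N, hN⟩ := exists_nat_one_div_lt hε
    have hk : 0 < k := i.pos
    -- An index at least `N` in the residue class of `i`.
    have hmod : (i + k * N) % k = i := by
      rw [Nat.add_mul_mod_self_left, Nat.mod_eq_of_lt i.2]
    have hge : N ≤ i + k * N := (Nat.le_mul_of_pos_left N hk).trans (Nat.le_add_left _ _)
    have h1 := lambdaLow_le hV (htest i _ hmod)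
    have h2 := hR (R (i + k * N)) (i + k * N)
    have h3 : 1 / (((i + k * N : ℕ) : ℝ) + 1) ≤ 1 / ((N : ℝ) + 1) :=
      Nat.one_div_le_one_div hge
    linarith

/-- if `λ(Ω) = Σ(Ω) < ∞` then `Λ_{k,p}(Ω) = k^(1/p)·Σ(Ω)` for all
`1 ≤ p < ∞`, and there is a `k`-partition whose cells all satisfy `λ(ωᵢ) = Σ(Ω)`,
attaining the infimum. -/
theorem statement_7 (d : ℕ) (hd : 2 ≤ d) (V : Euc d → ℝ)
    (hVmeas : Measurable V)
    (hVloc : ∀ K : Set (Euc d), IsCompact K → ∃ C : ℝ, ∀ x ∈ K, V x ≤ C)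
    (hVpos : ∀ x, 0 ≤ V x)
    (Ω : Set (Euc d)) (hΩ : IsOpen Ω) (hunb : ¬ Bornology.IsBounded Ω)
    (hbdd : BddAbove (specSet d V Ω))
    (heq : lambdaLow d V Ω = SigmaR d V Ω) :
    ∀ k : ℕ, 1 ≤ k →
      (∀ p : ℝ, 1 ≤ p → LamP d V Ω k p = (k : ℝ) ^ (1 / p) * SigmaR d V Ω) ∧
      ∃ ω : Fin k → Set (Euc d), IsPartition d Ω ω ∧
        (∀ i, lambdaLow d V (ω i) = SigmaR d V Ω) ∧
        ∀ p : ℝ, 1 ≤ p →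
          (∑ i, lambdaLow d V (ω i) ^ p) ^ (1 / p) = LamP d V Ω k p := by
  intro k _
  obtain ⟨ω, hω, hle⟩ := exists_cells hVpos hΩ hunb hbdd k
  have hge : ∀ s : Set (Euc d), IsOpen s → s.Nonempty → s ⊆ Ω →
      SigmaR d V Ω ≤ lambdaLow d V s := fun s h1 h2 h3 => heq ▸ lambdaLow_mono hVpos h1 h2 h3
  have hS0 : 0 ≤ SigmaR d V Ω := by
    rw [← heq]
    refine Real.sInf_nonneg ?_
    rintro _ ⟨v, -, -, -, -, rfl⟩
    exact rayleighQ_nonneg hVpos v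
  have hlam : ∀ i, lambdaLow d V (ω i) = SigmaR d V Ω := fun i =>
    (hle i).antisymm (hge _ (hω.1 i) (hω.2.1 i) (hω.2.2.1 i))
  have hconst : ∀ p : ℝ, 1 ≤ p →
      (∑ _i : Fin k, SigmaR d V Ω ^ p) ^ (1 / p) = (k : ℝ) ^ (1 / p) * SigmaR d V Ω := by
    intro p hp
    rw [Finset.sum_const, Finset.card_univ, Fintype.card_fin, nsmul_eq_mul,
      Real.mul_rpow (Nat.cast_nonneg k) (Real.rpow_nonneg hS0 p), one_div,
      Real.rpow_rpow_inv hS0 (by linarith)]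
  have hval : ∀ p : ℝ, 1 ≤ p →
      (∑ i, lambdaLow d V (ω i) ^ p) ^ (1 / p) = (k : ℝ) ^ (1 / p) * SigmaR d V Ω := by
    intro p hp
    simp only [hlam]
    exact hconst p hp
  have hmain : ∀ p : ℝ, 1 ≤ p → LamP d V Ω k p = (k : ℝ) ^ (1 / p) * SigmaR d V Ω := by
    intro p hp
    have hp0 : 0 ≤ p := by linarith
    refine IsLeast.csInf_eq ⟨⟨ω, hω, (hval p hp).symm⟩, ?_⟩
    rintro _ ⟨s, hs, rfl⟩
    rw [← hconst p hp]
    refine Real.rpow_le_rpow (Finset.sum_nonneg fun _ _ => Real.rpow_nonneg hS0 p)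
      (Finset.sum_le_sum fun i _ => ?_) (by positivity)
    exact Real.rpow_le_rpow hS0 (hge _ (hs.1 i) (hs.2.1 i) (hs.2.2.1 i)) hp0
  exact ⟨hmain, ω, hω, hlam, fun p hp => (hval p hp).trans (hmain p hp).symm⟩
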